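/- Let L be the extension of DataLTL by the additional formation rule φ ::= ρ U_@ (@ ∧ τ), where ρ and τ range over position formulas (formulas containing none of the class operators X⁼, Y⁼, U⁼, S⁼ and no U_@), with semantics: w, i ⊨ ρ U_@ (@ ∧ τ) iff there exists j ≥ i with d j = d i, w, j ⊨ τ, and w, k ⊨ ρ for all k with i ≤ k < j. Then satisfiability of L-formulas over finite 1-attributed words is undecidable: there is no computable function f from L-formulas to Bool such that f(φ) = true if and only if φ is satisfiable over finite 1-attributed words. -/

import Mathlib

/-!
STATEMENT 0: Satisfiability of the extension `L` of DataLTL by the rule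
φ ::= ρ U_@ (@ ∧ τ) (with ρ, τ position formulas) is undecidable over
finite 1-attributed words.
-/

namespace Stmt0

/-- Position formulas: no class operators and no `U_@`.
Atomic propositions are identified with natural numbers. -/
inductive PosFormula : Type where
  | atom : ℕ → PosFormula
  | neg  : PosFormula → PosFormula
  | or   : PosFormula → PosFormula → PosFormula
  | X    : PosFormula → PosFormula
  | Y    : PosFormula → PosFormula
  | U    : PosFormula → PosFormula → PosFormula
  | S    : PosFormula → PosFormula → PosFormula

/-- Formulas of the logic `L`: full DataLTL, plus the additional rule
`uat ρ τ` representing ρ U_@ (@ ∧ τ) where ρ, τ are position formulas. -/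
inductive LFormula : Type where
  | atom : ℕ → LFormula
  | neg  : LFormula → LFormula
  | or   : LFormula → LFormula → LFormula
  | X    : LFormula → LFormula
  | Y    : LFormula → LFormula
  | U    : LFormula → LFormula → LFormula
  | S    : LFormula → LFormula → LFormula
  | Xeq  : LFormula → LFormula
  | Yeq  : LFormula → LFormula
  | Ueq  : LFormula → LFormula → LFormula
  | Seq  : LFormula → LFormula → LFormula
  | uat  : PosFormula → PosFormula → LFormula

/-- A finite 1-attributed word: length `n ≥ 1`, a labeling with sets of
atomic propositions, and a data value at each position. -/
structure Word : Type where
  n : ℕ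
  npos : 0 < n
  lab : Fin n → Set ℕ
  d : Fin n → ℕ

/-- Satisfaction for position formulas on finite 1-attributed words. -/
def satP (w : Word) : Fin w.n → PosFormula → Prop
  | i, .atom p => p ∈ w.lab i
  | i, .neg φ => ¬ satP w i φ
  | i, .or φ ψ => satP w i φ ∨ satP w i ψ
  | i, .X φ => ∃ h : (i : ℕ) + 1 < w.n, satP w ⟨(i : ℕ) + 1, h⟩ φ
  | i, .Y φ => 0 < (i : ℕ) ∧
      satP w ⟨(i : ℕ) - 1, Nat.lt_of_le_of_lt (Nat.sub_le _ _) i.isLt⟩ φ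
  | i, .U φ ψ => ∃ j : Fin w.n, i ≤ j ∧ satP w j ψ ∧
      ∀ k : Fin w.n, i ≤ k → k < j → satP w k φ
  | i, .S φ ψ => ∃ j : Fin w.n, j ≤ i ∧ satP w j ψ ∧
      ∀ k : Fin w.n, j < k → k ≤ i → satP w k φ

/-- Satisfaction for `L`-formulas on finite 1-attributed words. -/
def satL (w : Word) : Fin w.n → LFormula → Prop
  | i, .atom p => p ∈ w.lab i
  | i, .neg φ => ¬ satL w i φ
  | i, .or φ ψ => satL w i φ ∨ satL w i ψ
  | i, .X φ => ∃ h : (i : ℕ) + 1 < w.n, satL w ⟨(i : ℕ) + 1, h⟩ φ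
  | i, .Y φ => 0 < (i : ℕ) ∧
      satL w ⟨(i : ℕ) - 1, Nat.lt_of_le_of_lt (Nat.sub_le _ _) i.isLt⟩ φ
  | i, .U φ ψ => ∃ j : Fin w.n, i ≤ j ∧ satL w j ψ ∧
      ∀ k : Fin w.n, i ≤ k → k < j → satL w k φ
  | i, .S φ ψ => ∃ j : Fin w.n, j ≤ i ∧ satL w j ψ ∧
      ∀ k : Fin w.n, j < k → k ≤ i → satL w k φ
  | i, .Xeq φ => ∃ j : Fin w.n, i < j ∧ w.d j = w.d i ∧
      (∀ k : Fin w.n, i < k → w.d k = w.d i → j ≤ k) ∧ satL w j φ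
  | i, .Yeq φ => ∃ j : Fin w.n, j < i ∧ w.d j = w.d i ∧
      (∀ k : Fin w.n, k < i → w.d k = w.d i → k ≤ j) ∧ satL w j φ
  | i, .Ueq φ ψ => ∃ j : Fin w.n, i ≤ j ∧ w.d j = w.d i ∧ satL w j ψ ∧
      ∀ k : Fin w.n, i ≤ k → k < j → w.d k = w.d i → satL w k φ
  | i, .Seq φ ψ => ∃ j : Fin w.n, j ≤ i ∧ w.d j = w.d i ∧ satL w j ψ ∧
      ∀ k : Fin w.n, j < k → k ≤ i → w.d k = w.d i → satL w k φ
  | i, .uat ρ τ => ∃ j : Fin w.n, i ≤ j ∧ w.d j = w.d i ∧ satP w j τ ∧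
      ∀ k : Fin w.n, i ≤ k → k < j → satP w k ρ

/-- Satisfiability over finite 1-attributed words. -/
def Satisfiable (φ : LFormula) : Prop :=
  ∃ w : Word, satL w ⟨0, w.npos⟩ φ

/-- An (injective) Gödel encoding of position formulas. -/
def encodeP : PosFormula → ℕ
  | .atom p => Nat.pair 0 p
  | .neg φ => Nat.pair 1 (encodeP φ)
  | .or φ ψ => Nat.pair 2 (Nat.pair (encodeP φ) (encodeP ψ))
  | .X φ => Nat.pair 3 (encodeP φ)
  | .Y φ => Nat.pair 4 (encodeP φ)
  | .U φ ψ => Nat.pair 5 (Nat.pair (encodeP φ) (encodeP ψ))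
  | .S φ ψ => Nat.pair 6 (Nat.pair (encodeP φ) (encodeP ψ))

/-- An (injective) Gödel encoding of `L`-formulas. -/
def encodeL : LFormula → ℕ
  | .atom p => Nat.pair 0 p
  | .neg φ => Nat.pair 1 (encodeL φ)
  | .or φ ψ => Nat.pair 2 (Nat.pair (encodeL φ) (encodeL ψ))
  | .X φ => Nat.pair 3 (encodeL φ)
  | .Y φ => Nat.pair 4 (encodeL φ)
  | .U φ ψ => Nat.pair 5 (Nat.pair (encodeL φ) (encodeL ψ))
  | .S φ ψ => Nat.pair 6 (Nat.pair (encodeL φ) (encodeL ψ))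
  | .Xeq φ => Nat.pair 7 (encodeL φ)
  | .Yeq φ => Nat.pair 8 (encodeL φ)
  | .Ueq φ ψ => Nat.pair 9 (Nat.pair (encodeL φ) (encodeL ψ))
  | .Seq φ ψ => Nat.pair 10 (Nat.pair (encodeL φ) (encodeL ψ))
  | .uat ρ τ => Nat.pair 11 (Nat.pair (encodeP ρ) (encodeP τ))

/-!
We reduce the halting problem on input `0`. Whether the code `n` halts within `k` steps is a
primitive recursive question about `(n, k)`, and primitive recursive functions are implemented by
nondeterministic counter programs: regular expressions over increments, decrements and zero tests,
where a program runs by performing some matching word of instructions without blocking. Code `n`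
halts iff the program that guesses its input and the number of steps has a non-blocking run that
starts with `n` increments of the input counter.

A sequence of instructions, together with the states of a finite automaton reading it, becomes a
data word in which the `m`-th increment and the `m`-th decrement of a counter carry the same datum.
The class operators force each decrement to be preceded by an increment of its own class. The
operator `U_@` forces each increment that precedes a zero test of its counter to meet a decrement
of its own class before the next such test. Hence a word whose data obey these rules never
decrements an empty counter and never tests a nonempty one, so the rules are satisfiable exactly
along non-blocking runs.
-/

section Regular

open Computability

variable {α : Type*}

theorem isRegular_of_finite_cover {L : Language α} {C : Set (Language α)} (hC : C.Finite)
    (h : ∀ x w, x ++ w ∈ L → ∃ A ∈ C, w ∈ A ∧ A ≤ L.leftQuotient x) : L.IsRegular := by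
  refine .of_finite_range_leftQuotient ((hC.finite_subsets.image sSup).subset ?_)
  rintro _ ⟨x, rfl⟩
  refine ⟨{A ∈ C | A ≤ L.leftQuotient x}, Set.sep_subset _ _, ?_⟩
  refine le_antisymm (sSup_le fun A hA => hA.2) fun w hw => ?_
  obtain ⟨A, hAC, hwA, hA⟩ := h x w hw
  exact le_sSup (show A ∈ {A ∈ C | A ≤ L.leftQuotient x} from ⟨hAC, hA⟩) hwA

theorem isRegular_mul {L M : Language α} (hL : L.IsRegular) (hM : M.IsRegular) :
    (L * M).IsRegular := by
  refine isRegular_of_finite_cover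
    ((hL.finite_range_leftQuotient.image (· * M)).union hM.finite_range_leftQuotient) ?_
  rintro x w ⟨u, hu, v, hv, huv⟩
  rcases List.append_eq_append_iff.1 huv with ⟨y, rfl, rfl⟩ | ⟨y, rfl, rfl⟩
  · refine ⟨_, .inr ⟨y, rfl⟩, hv, fun z hz => ?_⟩
    exact ⟨u, hu, y ++ z, hz, (List.append_assoc _ _ _).symm⟩
  · refine ⟨_, .inl ⟨_, ⟨x, rfl⟩, rfl⟩, ⟨y, hu, v, hv, rfl⟩, ?_⟩
    rintro _ ⟨y', hy', v', hv', rfl⟩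
    exact ⟨x ++ y', hy', v', hv', List.append_assoc _ _ _⟩

theorem append_mem_kstar {L : Language α} {u v : List α} (hu : u ∈ L) (hv : v ∈ L∗) :
    u ++ v ∈ L∗ := by
  rw [← Language.one_add_self_mul_kstar_eq_kstar]
  exact .inr ⟨u, hu, v, hv, rfl⟩

theorem isRegular_kstar {L : Language α} (hL : L.IsRegular) : (L∗).IsRegular := by
  refine isRegular_of_finite_cover
    ((hL.finite_range_leftQuotient.image (· * L∗)).insert L∗) fun x w hxw => ?_
  obtain ⟨factors, hjoin, hfactors⟩ := Language.mem_kstar.1 hxw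
  induction factors generalizing x with
  | nil =>
    obtain ⟨rfl, rfl⟩ := List.append_eq_nil_iff.1 hjoin
    exact ⟨L∗, .inl rfl, Language.nil_mem_kstar L, by rw [Language.leftQuotient_nil]⟩
  | cons u us ih =>
    have hu : u ∈ L := hfactors u List.mem_cons_self
    have hus : ∀ v ∈ us, v ∈ L := fun v hv => hfactors v (List.mem_cons_of_mem u hv)
    rcases List.append_eq_append_iff.1 hjoin with ⟨y, rfl, rfl⟩ | ⟨y, rfl, hy⟩
    · refine ⟨_, .inr ⟨_, ⟨x, rfl⟩, rfl⟩, ⟨y, hu, _, Language.join_mem_kstar hus, rfl⟩, ?_⟩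
      rintro _ ⟨y', hy', v', hv', rfl⟩
      change x ++ (y' ++ v') ∈ L∗
      rw [← List.append_assoc]
      exact append_mem_kstar hy' hv'
    · obtain ⟨A, hAC, hwA, hA⟩ := ih y (hy ▸ Language.join_mem_kstar hus) hy.symm hus
      refine ⟨A, hAC, hwA, fun z hz => ?_⟩
      change u ++ y ++ z ∈ L∗
      rw [List.append_assoc]
      exact append_mem_kstar hu (hA hz)

theorem isRegular_singleton (x : List α) : ({x} : Language α).IsRegular := by
  refine isRegular_of_finite_cover (x.tails.finite_toSet.image fun y => ({y} : Language α)) ?_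
  rintro y w rfl
  exact ⟨{w}, ⟨w, by simp, rfl⟩, rfl, by rintro _ rfl; rfl⟩

theorem isRegular_matches' (P : RegularExpression α) : P.matches'.IsRegular := by
  induction P with
  | zero => exact isRegular_of_finite_cover Set.finite_empty fun _ _ h => h.elim
  | epsilon => exact isRegular_singleton []
  | char a => exact isRegular_singleton [a]
  | plus P Q hP hQ => exact hP.add hQ
  | comp P Q hP hQ => exact isRegular_mul hP hQ
  | star P hP => exact isRegular_kstar hP

theorem exists_finset_letters (P : RegularExpression α) :
    ∃ A : Finset α, ∀ x ∈ P.matches', ∀ a ∈ x, a ∈ A := by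
  classical
  induction P with
  | zero => exact ⟨∅, fun _ h => h.elim⟩
  | epsilon => exact ⟨∅, by rintro _ rfl; simp⟩
  | char a => exact ⟨{a}, by rintro _ rfl; simp⟩
  | plus P Q hP hQ =>
    obtain ⟨A, hA⟩ := hP
    obtain ⟨B, hB⟩ := hQ
    refine ⟨A ∪ B, fun x hx a ha => Finset.mem_union.2 ?_⟩
    exact hx.imp (hA x · a ha) (hB x · a ha)
  | comp P Q hP hQ =>
    obtain ⟨A, hA⟩ := hP
    obtain ⟨B, hB⟩ := hQ
    refine ⟨A ∪ B, ?_⟩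
    rintro _ ⟨x, hx, y, hy, rfl⟩ a ha
    exact Finset.mem_union.2 ((List.mem_append.1 ha).imp (hA x hx a) (hB y hy a))
  | star P hP =>
    obtain ⟨A, hA⟩ := hP
    refine ⟨A, ?_⟩
    rintro _ ⟨xs, rfl, hxs⟩ a ha
    obtain ⟨x, hx, hax⟩ := List.mem_flatten.1 ha
    exact hA x (hxs x hx) a hax

end Regular

section CounterPrograms

open Function RegularExpression Computability

/-- Instructions of a counter machine: increment, decrement (blocking on `0`), and zero test
(blocking on positive values). -/
inductive Instr : Type where
  | inc (r : ℕ)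
  | dec (r : ℕ)
  | zero (r : ℕ)
  deriving DecidableEq, Encodable

/-- The contents of the counters. -/
abbrev Counters : Type := ℕ → ℕ

/-- The effect of an instruction, `none` if it blocks. -/
def step (s : Counters) : Instr → Option Counters
  | .inc r => some (update s r (s r + 1))
  | .dec r => if s r = 0 then none else some (update s r (s r - 1))
  | .zero r => if s r = 0 then some s else none

/-- A nondeterministic counter program, given by the regular language of the sequences of
instructions it may try to execute. -/
abbrev Program : Type := RegularExpression Instr

/-- The counter contents a program may terminate with, when started in `s`. -/
def post (P : Program) (s : Counters) : Set Counters :=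
  {t | ∃ x ∈ P.matches', x.foldlM step s = some t}

theorem post_one (s : Counters) : post 1 s = {s} := by
  ext t
  simp [post, eq_comm]

theorem post_char (a : Instr) (s : Counters) : post (char a) s = {t | step s a = some t} := by
  ext t
  constructor
  · rintro ⟨_, rfl, h⟩
    simpa using h
  · exact fun h => ⟨[a], rfl, by simpa using h⟩

theorem post_mul (P Q : Program) (s : Counters) : post (P * Q) s = ⋃ t ∈ post P s, post Q t := by
  ext u
  simp only [post, matches'_mul, Language.mem_mul, Set.mem_ofPred_eq, Set.mem_iUnion, exists_prop]
  constructor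
  · rintro ⟨_, ⟨x, hx, y, hy, rfl⟩, hxy⟩
    rw [List.foldlM_append] at hxy
    obtain ⟨t, ht, hu⟩ := Option.bind_eq_some_iff.1 hxy
    exact ⟨t, ⟨x, hx, ht⟩, y, hy, hu⟩
  · rintro ⟨t, ⟨x, hx, ht⟩, y, hy, hu⟩
    refine ⟨x ++ y, ⟨x, hx, y, hy, rfl⟩, ?_⟩
    rw [List.foldlM_append]
    exact Option.bind_eq_some_iff.2 ⟨t, ht, hu⟩

theorem post_star (P : Program) (s : Counters) :
    post P.star s = insert s (⋃ t ∈ post P s, post P.star t) := by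
  have unfold_star : P.star.matches' = (1 + P * P.star).matches' :=
    (Language.one_add_self_mul_kstar_eq_kstar P.matches').symm
  rw [← post_mul, ← Set.singleton_union, ← post_one]
  ext t
  simp only [post, unfold_star, matches'_add, Language.mem_add, or_and_right, exists_or]
  rfl

theorem post_mul_of_eq {P Q : Program} {s t : Counters} (h : post P s = {t}) :
    post (P * Q) s = post Q t := by
  rw [post_mul, h, Set.biUnion_singleton]

theorem post_inc (r : ℕ) (s : Counters) : post (char (.inc r)) s = {update s r (s r + 1)} := by
  ext t
  simp [post_char, step, eq_comm]

theorem post_zero_of_eq_zero {r : ℕ} {s : Counters} (h : s r = 0) :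
    post (char (.zero r)) s = {s} := by
  ext t
  simp [post_char, step, h, eq_comm]

theorem post_zero_of_ne_zero {r : ℕ} {s : Counters} (h : s r ≠ 0) :
    post (char (.zero r)) s = ∅ := by
  simp [post_char, step, h]

theorem post_dec_of_eq_zero {r : ℕ} {s : Counters} (h : s r = 0) :
    post (char (.dec r)) s = ∅ := by
  simp [post_char, step, h]

theorem post_dec_of_ne_zero {r : ℕ} {s : Counters} (h : s r ≠ 0) :
    post (char (.dec r)) s = {update s r (s r - 1)} := by
  ext t
  simp [post_char, step, h, eq_comm]

theorem mem_matches'_star_char {α : Type*} {a : α} {x : List α} :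
    x ∈ (char a).star.matches' ↔ ∃ k, x = List.replicate k a := by
  constructor
  · rintro ⟨xs, rfl, hxs⟩
    refine ⟨xs.flatten.length, List.eq_replicate_length.2 fun b hb => ?_⟩
    obtain ⟨y, hy, hby⟩ := List.mem_flatten.1 hb
    obtain rfl : y = [a] := hxs y hy
    exact List.mem_singleton.1 hby
  · rintro ⟨k, rfl⟩
    refine ⟨List.replicate k [a], by simp, fun y hy => List.eq_of_mem_replicate hy⟩

theorem foldlM_replicate_inc (k r : ℕ) (s : Counters) :
    (List.replicate k (Instr.inc r)).foldlM step s = some (update s r (s r + k)) := by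
  induction k generalizing s with
  | zero => simp
  | succ k ih => simp [List.replicate_succ, step, ih, add_assoc, add_comm 1 k]

theorem post_star_inc (r : ℕ) (s : Counters) :
    post (char (Instr.inc r)).star s = Set.range fun k => update s r (s r + k) := by
  ext t
  simp only [post, mem_matches'_star_char, Set.mem_ofPred_eq, Set.mem_range]
  constructor
  · rintro ⟨_, ⟨k, rfl⟩, h⟩
    exact ⟨k, by simpa [foldlM_replicate_inc] using h⟩
  · rintro ⟨k, rfl⟩
    exact ⟨_, ⟨k, rfl⟩, foldlM_replicate_inc k r s⟩

/-- Repeat `P` until counter `r` is empty, decrementing it before every round. -/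
def loop (r : ℕ) (P : Program) : Program := (char (Instr.dec r) * P).star * char (.zero r)

theorem post_loop_of_eq_zero {r : ℕ} {s : Counters} (h : s r = 0) (P : Program) :
    post (loop r P) s = {s} := by
  rw [loop, post_mul, post_star, post_mul, post_dec_of_eq_zero h]
  simp only [Set.biUnion_empty, Set.biUnion_insert, Set.union_empty, post_zero_of_eq_zero h]

theorem post_loop_of_ne_zero {r : ℕ} {s : Counters} (h : s r ≠ 0) (P : Program) :
    post (loop r P) s = ⋃ t ∈ post P (update s r (s r - 1)), post (loop r P) t := by
  rw [loop, post_mul, post_star, post_mul_of_eq (post_dec_of_ne_zero h), Set.biUnion_insert,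
    post_zero_of_ne_zero h, Set.empty_union]
  simp only [Set.biUnion_iUnion, post_mul _ (char (Instr.zero r))]

theorem post_loop_of_invariant {r : ℕ} {P : Program} (m : ℕ) (I : ℕ → Counters)
    (hI : ∀ k ≤ m, I k r = k) (hP : ∀ k < m, post P (update (I (k + 1)) r k) = {I k}) :
    post (loop r P) (I m) = {I 0} := by
  induction m with
  | zero => exact post_loop_of_eq_zero (hI 0 le_rfl) P
  | succ m ih =>
    have hm : I (m + 1) r = m + 1 := hI (m + 1) le_rfl
    rw [post_loop_of_ne_zero (by omega), hm, Nat.add_sub_cancel, hP m m.lt_succ_self,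
      Set.biUnion_singleton]
    exact ih (fun k hk => hI k (by omega)) fun k hk => hP k (by omega)

/-- Reset counter `r`. -/
def clear (r : ℕ) : Program := loop r 1

theorem post_clear (r : ℕ) (s : Counters) : post (clear r) s = {update s r 0} := by
  simpa [clear] using post_loop_of_invariant (r := r) (P := 1) (s r) (fun k => update s r k)
    (by simp) (by simp [post_one])

/-- Add counter `a` to counter `c`, resetting `a`. -/
def move (a c : ℕ) : Program := loop a (char (.inc c))

theorem post_move {a c : ℕ} (hac : a ≠ c) (s : Counters) :
    post (move a c) s = {update (update s a 0) c (s c + s a)} := by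
  have key := post_loop_of_invariant (r := a) (P := char (.inc c)) (s a)
    (fun k => update (update s a k) c (s c + (s a - k))) (by simp [hac]) (fun k hk => by
      rw [post_inc, Set.singleton_eq_singleton_iff]
      funext x
      simp only [update_apply]
      grind)
  simpa [move] using key

/-- Add counter `a` to counter `c`, using counter `t` to restore `a`. -/
def copy (a c t : ℕ) : Program := loop a (char (.inc c) * char (.inc t)) * move t a

theorem post_copy {a c t : ℕ} (hac : a ≠ c) (hat : a ≠ t) (hct : c ≠ t) {s : Counters}
    (ht : s t = 0) : post (copy a c t) s = {update s c (s c + s a)} := by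
  have key := post_loop_of_invariant (r := a) (P := char (.inc c) * char (.inc t)) (s a)
    (fun k => update (update (update s a k) c (s c + (s a - k))) t (s a - k))
    (by simp [hac, hat]) (fun k hk => by
      rw [post_mul_of_eq (post_inc _ _), post_inc, Set.singleton_eq_singleton_iff]
      funext x
      simp only [update_apply]
      grind)
  have start : update (update (update s a (s a)) c (s c + (s a - s a))) t (s a - s a) = s := by
    simp [update_eq_self_iff, ht]
  rw [copy, post_mul_of_eq (start ▸ key), post_move hat.symm, Set.singleton_eq_singleton_iff]
  funext x
  simp only [update_apply]
  grind

end CounterPrograms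

section PrimitiveRecursion

open Function RegularExpression

theorem map_eq_map_of_forall_mem {α β : Type*} {n : ℕ} {v : List.Vector α n} {s t : α → β}
    (h : ∀ r ∈ v.toList, s r = t r) : v.map s = v.map t := by
  apply List.Vector.eq
  simpa only [List.Vector.toList_map, List.map_inj_left] using h

/-- `f` is computed by counter programs that read their arguments from any given counters, add
the result to any given empty counter `out`, and use the counters from `b` on as scratch space,
which they find and leave empty. -/
def Implementable {n : ℕ} (f : List.Vector ℕ n → ℕ) : Prop :=
  ∀ (args : List.Vector ℕ n) (out b : ℕ), (∀ r ∈ args.toList, r < b) → out < b →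
    out ∉ args.toList → ∃ P : Program, ∀ s : Counters, (∀ r, b ≤ r → s r = 0) → s out = 0 →
      post P s = {update s out (f (args.map s))}

theorem implementable_zero {n : ℕ} : Implementable fun _ : List.Vector ℕ n => 0 :=
  fun _ _ _ _ _ _ => ⟨1, fun s _ ho => by rw [post_one, update_eq_self_iff.2 ho.symm]⟩

theorem implementable_get {n : ℕ} (i : Fin n) :
    Implementable fun v : List.Vector ℕ n => v.get i := by
  intro args out b hargs hout hnot
  have hmem : args.get i ∈ args.toList := List.Vector.get_mem i args
  have hlt : args.get i < b := hargs _ hmem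
  have hne : args.get i ≠ out := fun h => hnot (h ▸ hmem)
  refine ⟨copy (args.get i) out b, fun s hs ho => ?_⟩
  rw [post_copy hne (by omega) (by omega) (hs b le_rfl), ho, zero_add]
  simp only [List.Vector.get_map]

theorem implementable_succ : Implementable fun v : List.Vector ℕ 1 => v.head.succ := by
  intro args out b hargs hout hnot
  obtain ⟨P, hP⟩ := implementable_get (0 : Fin 1) args out b hargs hout hnot
  refine ⟨P * char (.inc out), fun s hs ho => ?_⟩
  rw [post_mul_of_eq (hP s hs ho), post_inc, update_idem, update_self]
  simp only [List.Vector.get_zero, Nat.succ_eq_add_one]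

/-- Overwrite the `n` counters from `b` on by `v`. -/
def setBlock (b n : ℕ) (v : ℕ → ℕ) (s : Counters) : Counters := fun r =>
  if b ≤ r ∧ r < b + n then v (r - b) else s r

theorem setBlock_zero (b : ℕ) (v : ℕ → ℕ) (s : Counters) : setBlock b 0 v s = s := by
  funext r
  grind [setBlock]

theorem setBlock_succ (b n : ℕ) (v : ℕ → ℕ) (s : Counters) :
    setBlock b (n + 1) v s = update (setBlock b n v s) (b + n) (v n) := by
  funext r
  grind [setBlock, update_apply]

theorem map_setBlock {m b n : ℕ} {args : List.Vector ℕ m} (hargs : ∀ r ∈ args.toList, r < b)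
    (v : ℕ → ℕ) (s : Counters) : args.map (setBlock b n v s) = args.map s :=
  map_eq_map_of_forall_mem fun r hr => by grind [setBlock]

theorem exists_post_eq_setBlock_zero (b n : ℕ) :
    ∃ P : Program, ∀ s, post P s = {setBlock b n 0 s} := by
  induction n with
  | zero => exact ⟨1, fun s => by rw [post_one, setBlock_zero]⟩
  | succ n ih =>
    obtain ⟨P, hP⟩ := ih
    exact ⟨P * clear (b + n), fun s => by
      rw [post_mul_of_eq (hP s), post_clear, setBlock_succ, Pi.zero_apply]⟩

theorem exists_post_eq_setBlock {m b : ℕ} {g : ℕ → List.Vector ℕ m → ℕ}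
    (hg : ∀ i, Implementable (g i)) {args : List.Vector ℕ m} (hargs : ∀ r ∈ args.toList, r < b)
    (n : ℕ) : ∃ P : Program, ∀ s : Counters, (∀ r, b ≤ r → s r = 0) →
      post P s = {setBlock b n (fun i => g i (args.map s)) s} := by
  induction n with
  | zero => exact ⟨1, fun s _ => by rw [post_one, setBlock_zero]⟩
  | succ n ih =>
    obtain ⟨P, hP⟩ := ih
    obtain ⟨Q, hQ⟩ := hg n args (b + n) (b + n + 1) (fun r hr => by have := hargs r hr; omega)
      (by omega) (fun hr => by have := hargs _ hr; omega)
    refine ⟨P * Q, fun s hs => ?_⟩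
    rw [post_mul_of_eq (hP s hs), hQ, map_setBlock hargs, setBlock_succ]
    · grind [setBlock]
    · grind [setBlock]

theorem map_setBlock_ofFn_add {n : ℕ} (b : ℕ) (v : ℕ → ℕ) (s : Counters) :
    (List.Vector.ofFn fun i : Fin n => b + i).map (setBlock b n v s) =
      List.Vector.ofFn fun i : Fin n => v i := by
  ext i
  simp [setBlock]

theorem setBlock_zero_update_setBlock {b n out : ℕ} (hout : out < b) {s : Counters}
    (hs : ∀ r, b ≤ r → s r = 0) (v : ℕ → ℕ) (y : ℕ) :
    setBlock b n 0 (update (setBlock b n v s) out y) = update s out y := by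
  funext r
  have := hs r
  simp only [setBlock, update_apply, Pi.zero_apply]
  grind

theorem implementable_comp {m n : ℕ} {f : List.Vector ℕ n → ℕ} {g : Fin n → List.Vector ℕ m → ℕ}
    (hf : Implementable f) (hg : ∀ i, Implementable (g i)) :
    Implementable fun v => f (List.Vector.ofFn fun i => g i v) := by
  intro args out b hargs hout _
  let g' (i : ℕ) : List.Vector ℕ m → ℕ := if h : i < n then g ⟨i, h⟩ else fun _ => 0
  have hg' (i : ℕ) : Implementable (g' i) := by
    by_cases h : i < n
    · simpa only [g', h, dif_pos] using hg ⟨i, h⟩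
    · simpa only [g', h, dif_neg, not_false_eq_true] using implementable_zero
  have block_bounds : ∀ r ∈ (List.Vector.ofFn fun i : Fin n => b + i).toList,
      b ≤ r ∧ r < b + n := by
    simp only [List.Vector.toList_ofFn, List.mem_ofFn, forall_exists_index]
    rintro _ i rfl
    omega
  obtain ⟨P, hP⟩ := exists_post_eq_setBlock hg' hargs n
  obtain ⟨Q, hQ⟩ := hf (List.Vector.ofFn fun i : Fin n => b + i) out (b + n)
    (fun r hr => (block_bounds r hr).2) (by omega)
    fun hr => by have := block_bounds out hr; omega
  obtain ⟨C, hC⟩ := exists_post_eq_setBlock_zero b n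
  refine ⟨P * (Q * C), fun s hs ho => ?_⟩
  rw [post_mul_of_eq (hP s hs), post_mul_of_eq (hQ _ ?_ ?_), hC,
    setBlock_zero_update_setBlock hout hs, map_setBlock_ofFn_add]
  · simp [g']
  · grind [setBlock]
  · grind [setBlock]

theorem exists_post_eq_update_recursion_step {n : ℕ} {g : List.Vector ℕ (n + 2) → ℕ}
    (hg : Implementable g) {args : List.Vector ℕ n} {out b : ℕ}
    (hargs : ∀ r ∈ args.toList, r < b) (hout : out < b) :
    ∃ P : Program, ∀ s : Counters, (∀ r, b + 2 ≤ r → s r = 0) →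
      post P s =
        {update (update s out (g (s b ::ᵥ s out ::ᵥ args.map s))) b (s b + 1)} := by
  obtain ⟨P, hP⟩ := hg (b ::ᵥ out ::ᵥ args) (b + 2) (b + 3)
    (by
      simp only [List.Vector.toList_cons, List.mem_cons, forall_eq_or_imp]
      exact ⟨by omega, by omega, fun r hr => by have := hargs r hr; omega⟩)
    (by omega)
    (by
      simp only [List.Vector.toList_cons, List.mem_cons, not_or]
      exact ⟨by omega, by omega, fun hr => by have := hargs _ hr; omega⟩)
  refine ⟨P * (clear out * (move (b + 2) out * char (.inc b))), fun s hs => ?_⟩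
  have hb : s (b + 2) = 0 := hs _ le_rfl
  rw [post_mul_of_eq (hP s (fun r hr => hs r (by omega)) hb), post_mul_of_eq (post_clear _ _),
    post_mul_of_eq (post_move (by omega) _), post_inc, Set.singleton_eq_singleton_iff]
  simp only [List.Vector.map_cons]
  funext r
  simp only [update_apply]
  grind

theorem exists_post_eq_update_recursion {n : ℕ} {g : List.Vector ℕ (n + 2) → ℕ}
    (hg : Implementable g) {args : List.Vector ℕ n} {out b : ℕ}
    (hargs : ∀ r ∈ args.toList, r < b) (hout : out < b) (hnot : out ∉ args.toList) :
    ∃ P : Program, ∀ s : Counters, s b = 0 → (∀ r, b + 2 ≤ r → s r = 0) →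
      post P s = {update (update s (b + 1) 0) out
        ((s (b + 1)).rec (s out) fun y ih => g (y ::ᵥ ih ::ᵥ args.map s))} := by
  obtain ⟨P, hP⟩ := exists_post_eq_update_recursion_step hg hargs hout
  refine ⟨loop (b + 1) P * clear b, fun s hb hs => ?_⟩
  set R : ℕ → ℕ := fun k => Nat.rec (motive := fun _ => ℕ) (s out)
    (fun y ih => g (y ::ᵥ ih ::ᵥ args.map s)) k
  have R_zero : R 0 = s out := rfl
  have R_succ (k : ℕ) : R (k + 1) = g (k ::ᵥ R k ::ᵥ args.map s) := rfl
  let m : ℕ := s (b + 1)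
  let I (k : ℕ) : Counters := update (update (update s (b + 1) k) b (m - k)) out (R (m - k))
  have I_start : I m = s := by
    funext r
    simp only [I, m, update_apply]
    grind
  have run_loop : post (loop (b + 1) P) (I m) = {I 0} := by
    refine post_loop_of_invariant m I (fun k _ => by grind) fun k hk => ?_
    have hIb : update (I (k + 1)) (b + 1) k b = m - (k + 1) := by grind
    have hIout : update (I (k + 1)) (b + 1) k out = R (m - (k + 1)) := by grind
    have hIargs : args.map (update (I (k + 1)) (b + 1) k) = args.map s :=
      map_eq_map_of_forall_mem fun r hr => by grind
    have hk' : m - (k + 1) + 1 = m - k := by omega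
    rw [hP _ fun r hr => ?_, hIb, hIout, hIargs, ← R_succ, hk', Set.singleton_eq_singleton_iff]
    · funext r
      grind
    · grind
  rw [← I_start, post_mul_of_eq run_loop, post_clear, I_start, Set.singleton_eq_singleton_iff]
  funext r
  simp only [I, update_apply, Nat.sub_zero]
  grind

theorem implementable_prec {n : ℕ} {f : List.Vector ℕ n → ℕ} {g : List.Vector ℕ (n + 2) → ℕ}
    (hf : Implementable f) (hg : Implementable g) :
    Implementable fun v : List.Vector ℕ (n + 1) =>
      v.head.rec (f v.tail) fun y ih => g (y ::ᵥ ih ::ᵥ v.tail) := by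
  intro args out b hargs hout hnot
  obtain ⟨a, args, rfl⟩ := args.exists_eq_cons
  simp only [List.Vector.toList_cons, List.mem_cons, forall_eq_or_imp, not_or] at hargs hnot
  obtain ⟨ha, hargs⟩ := hargs
  obtain ⟨hoa, hnot⟩ := hnot
  obtain ⟨P, hP⟩ := hf args out (b + 2) (fun r hr => by have := hargs r hr; omega) (by omega) hnot
  obtain ⟨Q, hQ⟩ := exists_post_eq_update_recursion hg hargs hout hnot
  refine ⟨copy a (b + 1) (b + 2) * (P * Q), fun s hs ho => ?_⟩
  have hb : s (b + 1) = 0 := hs _ (by omega)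
  have map_args {t : Counters} (ht : ∀ r < b, r ≠ out → t r = s r) : args.map t = args.map s :=
    map_eq_map_of_forall_mem fun r hr => ht r (hargs r hr) (by rintro rfl; exact hnot hr)
  let t : Counters := update (update s (b + 1) (s a)) out (f (args.map s))
  have run_base : post (copy a (b + 1) (b + 2) * (P * Q)) s = post Q t := by
    rw [post_mul_of_eq (post_copy (by omega) (by omega) (by omega) (hs _ (by omega))), hb, zero_add,
      post_mul_of_eq (hP _ ?_ ?_), map_args]
    all_goals grind
  have t_erase (y : ℕ) : update (update t (b + 1) 0) out y = update s out y := by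
    funext r
    simp only [t, update_apply]
    grind
  rw [run_base, hQ t (by grind) (by grind), t_erase, map_args (t := t) (by grind),
    show t out = f (args.map s) by simp [t], show t (b + 1) = s a by grind]
  simp only [List.Vector.map_cons, List.Vector.head_cons, List.Vector.tail_cons]

theorem implementable_of_primrec {n : ℕ} {f : List.Vector ℕ n → ℕ} (hf : Nat.Primrec' f) :
    Implementable f := by
  induction hf with
  | zero => exact implementable_zero
  | succ => exact implementable_succ
  | get i => exact implementable_get i
  | comp g _ _ hf hg => exact implementable_comp hf hg
  | prec _ _ hf hg => exact implementable_prec hf hg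

end PrimitiveRecursion

section Halting

open Function RegularExpression Nat.Partrec

theorem exists_primrec_dom_eval_iff : ∃ f : List.Vector ℕ 2 → ℕ, Nat.Primrec' f ∧
    ∀ c : Code, (c.eval 0).Dom ↔ ∃ k, f (Encodable.encode c ::ᵥ k ::ᵥ .nil) = 0 := by
  let halts (v : List.Vector ℕ 2) : Bool :=
    (Code.evaln (v.get 1) (Denumerable.ofNat Code (v.get 0)) 0).isSome
  have primrec_get (i : Fin 2) : Primrec fun v : List.Vector ℕ 2 => v.get i :=
    Primrec.vector_get.comp .id (.const i)
  have primrec_halts : Primrec halts := Primrec.option_isSome.comp (Code.primrec_evaln.comp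
    (((primrec_get 1).pair ((Primrec.ofNat Code).comp (primrec_get 0))).pair (.const 0)))
  refine ⟨fun v => bif halts v then 0 else 1,
    .of_prim (Primrec.cond primrec_halts (.const 0) (.const 1)), fun c => ?_⟩
  have halts_iff (k : ℕ) : (bif halts (Encodable.encode c ::ᵥ k ::ᵥ .nil) then 0 else 1) = 0 ↔
      ∃ y, y ∈ Code.evaln k c 0 := by
    rw [show halts (Encodable.encode c ::ᵥ k ::ᵥ .nil) = (Code.evaln k c 0).isSome from
      congrArg (fun c => (Code.evaln k c 0).isSome) (Denumerable.ofNat_encode c)]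
    cases Code.evaln k c 0 <;> simp
  simp only [halts_iff, Part.dom_iff_mem, Code.evaln_complete]
  exact exists_comm

theorem replicate_append_singleton_prefix_iff {α : Type*} {a b : α} (hab : a ≠ b) {n k : ℕ}
    {y : List α} : List.replicate n a ++ [b] <+: List.replicate k a ++ b :: y ↔ n = k := by
  induction n generalizing k with
  | zero => cases k <;> simp [List.replicate_succ, hab.symm]
  | succ n ih => cases k <;> simp [List.replicate_succ, hab, ih]

/-- The program that nondeterministically loads an input into counter `0` before running `P`. The
zero test of the empty counter `1` marks the end of the input. -/
def withInput (P : Program) : Program := (char (.inc 0)).star * (char (.zero 1) * P)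

/-- The beginning of the runs of `withInput P` on input `n`. -/
def inputPrefix (n : ℕ) : List Instr := List.replicate n (.inc 0) ++ [.zero 1]

theorem foldlM_inputPrefix (n : ℕ) : (inputPrefix n).foldlM step 0 =
    some (update (0 : Counters) 0 n) := by
  simp [inputPrefix, foldlM_replicate_inc, step]

theorem mem_withInput_and_prefix_iff {P : Program} {n : ℕ} {x : List Instr} :
    x ∈ (withInput P).matches' ∧ inputPrefix n <+: x ↔
      ∃ y ∈ P.matches', x = inputPrefix n ++ y := by
  constructor
  · rintro ⟨⟨_, hu, _, ⟨_, rfl, y, hy, rfl⟩, rfl⟩, hprefix⟩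
    obtain ⟨k, rfl⟩ := mem_matches'_star_char.1 hu
    obtain rfl := (replicate_append_singleton_prefix_iff (by simp)).1 hprefix
    exact ⟨y, hy, by simp [inputPrefix]⟩
  · rintro ⟨y, hy, rfl⟩
    refine ⟨⟨_, mem_matches'_star_char.2 ⟨n, rfl⟩, _, ⟨_, rfl, y, hy, rfl⟩, ?_⟩,
      List.prefix_append _ _⟩
    simp [inputPrefix]

theorem exists_run_withInput_iff (P : Program) (n : ℕ) :
    (∃ x ∈ (withInput P).matches', inputPrefix n <+: x ∧ (x.foldlM step 0).isSome) ↔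
      (post P (update (0 : Counters) 0 n)).Nonempty := by
  simp only [← and_assoc, mem_withInput_and_prefix_iff, Set.Nonempty, post, Set.mem_ofPred_eq]
  constructor
  · rintro ⟨_, ⟨y, hy, rfl⟩, hrun⟩
    rw [List.foldlM_append, foldlM_inputPrefix] at hrun
    obtain ⟨t, ht⟩ := Option.isSome_iff_exists.1 hrun
    exact ⟨t, y, hy, ht⟩
  · rintro ⟨t, y, hy, ht⟩
    refine ⟨_, ⟨y, hy, rfl⟩, ?_⟩
    rw [List.foldlM_append, foldlM_inputPrefix]
    exact Option.isSome_iff_exists.2 ⟨t, ht⟩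

theorem exists_program_dom_eval_iff : ∃ P : Program, ∀ c : Code, (c.eval 0).Dom ↔
    ∃ x ∈ P.matches', inputPrefix (Encodable.encode c) <+: x ∧ (x.foldlM step 0).isSome := by
  obtain ⟨f, hf, dom_iff⟩ := exists_primrec_dom_eval_iff
  obtain ⟨P, hP⟩ := implementable_of_primrec hf (0 ::ᵥ 1 ::ᵥ .nil) 2 3 (by simp) (by simp) (by simp)
  refine ⟨withInput ((char (.inc 1)).star * (P * char (.zero 2))), fun c => ?_⟩
  rw [dom_iff, exists_run_withInput_iff, post_mul, post_star_inc, Set.biUnion_range,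
    Set.nonempty_iUnion]
  refine exists_congr fun k => ?_
  rw [post_mul_of_eq (hP _ ?_ (by simp))]
  swap
  · exact fun r hr => by simp [show r ≠ 0 by omega, show r ≠ 1 by omega]
  by_cases hzero : f (Encodable.encode c ::ᵥ k ::ᵥ .nil) = 0
  · simp [post_zero_of_eq_zero, hzero]
  · simp [post_zero_of_ne_zero, hzero]

end Halting

section Matching

variable {δ : Type*} {N : ℕ} {a : ℕ → Instr} {D : ℕ → δ}

/-- The number of increments of counter `r` before position `i`. -/
abbrev incs (a : ℕ → Instr) (r i : ℕ) : ℕ := Nat.count (a · = .inc r) i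

/-- The number of decrements of counter `r` before position `i`. -/
abbrev decs (a : ℕ → Instr) (r i : ℕ) : ℕ := Nat.count (a · = .dec r) i

/-- The instruction given by the last argument does not block at position `i` of the sequence `a`,
started with empty counters. -/
def EnabledAt (a : ℕ → Instr) (i : ℕ) : Instr → Prop
  | .inc _ => True
  | .dec r => decs a r i < incs a r i
  | .zero r => incs a r i ≤ decs a r i

theorem add_decs_eq_incs {s : Counters} (h : ((List.range N).map a).foldlM step 0 = some s)
    (r : ℕ) : s r + decs a r N = incs a r N := by
  induction N generalizing s with
  | zero => simp_all [eq_comm]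
  | succ N ih =>
    rw [List.range_succ, List.map_append, List.foldlM_append] at h
    obtain ⟨t, ht, hstep⟩ := Option.bind_eq_some_iff.1 h
    have invariant : t r + decs a r N = incs a r N := ih ht
    have hs : step t (a N) = some s := by simpa using hstep
    cases haN : a N with
    | inc q =>
      obtain rfl : _ = s := by simpa [haN, step] using hs
      grind
    | dec q =>
      obtain ⟨hq, rfl⟩ : t q ≠ 0 ∧ _ = s := by simpa [haN, step] using hs
      grind
    | zero q =>
      obtain ⟨-, rfl⟩ : t q = 0 ∧ _ = s := by simpa [haN, step] using hs
      grind

theorem isSome_step_iff_enabledAt {s : Counters} {i : ℕ}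
    (h : ∀ r, s r + decs a r i = incs a r i) (b : Instr) : (step s b).isSome ↔ EnabledAt a i b := by
  cases b with
  | inc r => simp [step, EnabledAt]
  | dec r => grind [step, EnabledAt]
  | zero r => grind [step, EnabledAt]

theorem isSome_foldlM_step_iff : (((List.range N).map a).foldlM step 0).isSome ↔
    ∀ i < N, EnabledAt a i (a i) := by
  induction N with
  | zero => simp
  | succ N ih =>
    rw [List.range_succ, List.map_append, List.foldlM_append, Nat.forall_lt_succ_right, ← ih]
    cases h : ((List.range N).map a).foldlM step 0 with
    | none => simp
    | some s => simp [isSome_step_iff_enabledAt (add_decs_eq_incs h)]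

/-- The data values `D` link position `i`, carrying the instruction given by the last argument, to
its partner: a decrement is preceded in its class by an increment of the same counter, while an
increment starts its class and is followed there by a decrement before the next zero test of its
counter, if there is one. -/
def MatchedAt (N : ℕ) (a : ℕ → Instr) (D : ℕ → δ) (i : ℕ) : Instr → Prop
  | .inc r => (∀ j < i, D j ≠ D i) ∧
      ((∃ j < N, i ≤ j ∧ D j = D i ∧ a j = .dec r ∧ ∀ k, i ≤ k → k < j → a k ≠ .zero r) ∨
        ∀ j < N, i ≤ j → a j ≠ .zero r)
  | .dec r => ∃ j < i, D j = D i ∧ (∀ k < i, D k = D i → k ≤ j) ∧ a j = .inc r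
  | .zero _ => True

theorem count_le_count_of_injOn {p q : ℕ → Prop} [DecidablePred p] [DecidablePred q] {m n : ℕ}
    (f : ℕ → ℕ) (hf : ∀ i < m, p i → f i < n ∧ q (f i))
    (hinj : ∀ i < m, ∀ j < m, p i → p j → f i = f j → i = j) : Nat.count p m ≤ Nat.count q n := by
  rw [Nat.count_eq_card_filter_range, Nat.count_eq_card_filter_range]
  refine Finset.card_le_card_of_injOn f (fun i hi => ?_) fun i hi j hj hij => ?_
  · simp only [Finset.coe_filter, Finset.mem_range, Set.mem_ofPred_eq] at hi ⊢
    exact hf i hi.1 hi.2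
  · simp only [Finset.coe_filter, Finset.mem_range, Set.mem_ofPred_eq] at hi hj
    exact hinj i hi.1 j hj.1 hi.2 hj.2 hij

theorem decs_lt_incs_of_matchedAt (h : ∀ i < N, MatchedAt N a D i (a i)) {i r : ℕ} (hi : i < N)
    (hr : a i = .dec r) : decs a r i < incs a r i := by
  have exists_opening : ∀ j, j < N ∧ a j = .dec r →
      ∃ k < j, D k = D j ∧ (∀ l < j, D l = D j → l ≤ k) ∧ a k = .inc r := by
    rintro j ⟨hj, hjr⟩
    simpa only [hjr, MatchedAt] using h j hj
  choose! opening opening_lt opening_class opening_last opening_inc using exists_opening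
  have count_succ : decs a r (i + 1) = decs a r i + 1 := by simp [decs, Nat.count_succ, hr]
  suffices decs a r (i + 1) ≤ incs a r i by omega
  refine count_le_count_of_injOn opening (fun j hj hjr => ?_) fun j hj k hk hjr hkr hjk => ?_
  · have := opening_lt j ⟨by omega, hjr⟩
    exact ⟨by omega, opening_inc j ⟨by omega, hjr⟩⟩
  · have hj' : j < N ∧ a j = .dec r := ⟨by omega, hjr⟩
    have hk' : k < N ∧ a k = .dec r := ⟨by omega, hkr⟩
    have same_class : D j = D k := by rw [← opening_class j hj', hjk, opening_class k hk']
    rcases lt_trichotomy j k with hlt | heq | hlt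
    · have := opening_last k hk' j hlt same_class
      have := opening_lt j hj'
      omega
    · exact heq
    · have := opening_last j hj' k hlt same_class.symm
      have := opening_lt k hk'
      omega

theorem incs_le_decs_of_matchedAt (h : ∀ i < N, MatchedAt N a D i (a i)) {i r : ℕ} (hi : i < N)
    (hr : a i = .zero r) : incs a r i ≤ decs a r i := by
  have exists_closing : ∀ j, j < i ∧ a j = .inc r →
      (∀ k < j, D k ≠ D j) ∧ ∃ k < i, D k = D j ∧ a k = .dec r := by
    rintro j ⟨hj, hjr⟩
    have matched : MatchedAt N a D j (.inc r) := hjr ▸ h j (by omega)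
    obtain ⟨fresh, ⟨k, hk, hjk, hD, hkr, no_zero⟩ | no_zero⟩ := matched
    · refine ⟨fresh, k, lt_of_not_ge fun hik => ?_, hD, hkr⟩
      rcases hik.eq_or_lt with rfl | hik
      · simp [hr] at hkr
      · exact no_zero i hj.le hik hr
    · exact (no_zero i hi hj.le hr).elim
  choose! fresh closing closing_lt closing_class closing_dec using exists_closing
  refine count_le_count_of_injOn closing
    (fun j hj hjr => ⟨closing_lt j ⟨hj, hjr⟩, closing_dec j ⟨hj, hjr⟩⟩)
    fun j hj k hk hjr hkr hjk => ?_
  have same_class : D j = D k := by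
    rw [← closing_class j ⟨hj, hjr⟩, hjk, closing_class k ⟨hk, hkr⟩]
  rcases lt_trichotomy j k with hlt | heq | hlt
  · exact (fresh k ⟨hk, hkr⟩ j hlt same_class).elim
  · exact heq
  · exact (fresh j ⟨hj, hjr⟩ k hlt same_class.symm).elim

theorem enabledAt_of_matchedAt (h : ∀ i < N, MatchedAt N a D i (a i)) {i : ℕ} (hi : i < N) :
    EnabledAt a i (a i) := by
  cases hr : a i with
  | inc r => trivial
  | dec r => exact decs_lt_incs_of_matchedAt h hi hr
  | zero r => exact incs_le_decs_of_matchedAt h hi hr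

/-- Data values matching the `m`-th increment of every counter with its `m`-th decrement. -/
def matchData (a : ℕ → Instr) (i : ℕ) : Option (ℕ × ℕ) :=
  match a i with
  | .inc r => some (r, incs a r i)
  | .dec r => some (r, decs a r i)
  | .zero _ => none

theorem matchData_eq_some_iff {i r m : ℕ} : matchData a i = some (r, m) ↔
    (a i = .inc r ∧ incs a r i = m) ∨ (a i = .dec r ∧ decs a r i = m) := by
  unfold matchData
  cases a i <;> simp +contextual

theorem exists_lt_and_count_eq {p : ℕ → Prop} [DecidablePred p] {m n : ℕ}
    (h : m < Nat.count p n) : ∃ i < n, p i ∧ Nat.count p i = m := by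
  have lt_card (hf : (Set.ofPred p).Finite) : m < hf.toFinset.card :=
    h.trans_le (Nat.count_le_card hf n)
  exact ⟨Nat.nth p m, Nat.nth_lt_of_lt_count h, Nat.nth_mem m lt_card, Nat.count_nth lt_card⟩

theorem matchData_ne_of_inc (h : ∀ i < N, EnabledAt a i (a i)) {i j r : ℕ} (hi : i < N)
    (hr : a i = .inc r) (hji : j < i) : matchData a j ≠ matchData a i := by
  intro heq
  rw [matchData_eq_some_iff.2 (.inl ⟨hr, rfl⟩), matchData_eq_some_iff] at heq
  rcases heq with ⟨hj, hcount⟩ | ⟨hj, hcount⟩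
  · exact hji.ne (Nat.count_injective hj hr hcount)
  · have decs_lt : decs a r j < incs a r j := by simpa only [hj, EnabledAt] using h j (hji.trans hi)
    have : incs a r j ≤ incs a r i := Nat.count_monotone _ hji.le
    omega

theorem exists_dec_matching_inc (h : ∀ i < N, EnabledAt a i (a i)) {i z r : ℕ} (hz : z < N)
    (hiz : i < z) (hi : a i = .inc r) (hzr : a z = .zero r) :
    ∃ j < z, i ≤ j ∧ a j = .dec r ∧ decs a r j = incs a r i := by
  have balanced : incs a r z ≤ decs a r z := by simpa only [hzr, EnabledAt] using h z hz
  have counted : incs a r i < incs a r z := Nat.count_strict_mono hi hiz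
  obtain ⟨j, hjz, hj, hcount⟩ : ∃ j < z, a j = .dec r ∧ decs a r j = incs a r i :=
    exists_lt_and_count_eq (counted.trans_le balanced)
  refine ⟨j, hjz, le_of_not_gt fun hji => ?_, hj, hcount⟩
  have decs_lt : decs a r j < incs a r j := by simpa only [hj, EnabledAt] using h j (hjz.trans hz)
  have : incs a r j ≤ incs a r i := Nat.count_monotone _ hji.le
  omega

theorem matchedAt_inc_matchData (h : ∀ i < N, EnabledAt a i (a i)) {i r : ℕ} (hi : i < N)
    (hr : a i = .inc r) : MatchedAt N a (matchData a) i (.inc r) := by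
  classical
  refine ⟨fun j hji => matchData_ne_of_inc h hi hr hji, or_iff_not_imp_right.2 fun hzero => ?_⟩
  have exists_zero : ∃ z, z < N ∧ i ≤ z ∧ a z = .zero r := by
    push Not at hzero
    exact hzero
  obtain ⟨hz, hiz, hzr⟩ := Nat.find_spec exists_zero
  have hiz' : i < Nat.find exists_zero := hiz.lt_of_ne fun heq => by simp [← heq, hr] at hzr
  obtain ⟨j, hjz, hij, hj, hcount⟩ := exists_dec_matching_inc h hz hiz' hr hzr
  refine ⟨j, hjz.trans hz, hij, ?_, hj, fun k hik hkj hkr => ?_⟩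
  · rw [matchData_eq_some_iff.2 (.inr ⟨hj, hcount⟩), matchData_eq_some_iff.2 (.inl ⟨hr, rfl⟩)]
  · exact Nat.find_min exists_zero (hkj.trans hjz) ⟨(hkj.trans hjz).trans hz, hik, hkr⟩

theorem matchedAt_dec_matchData {i r : ℕ} (h : EnabledAt a i (.dec r)) (hr : a i = .dec r) :
    MatchedAt N a (matchData a) i (.dec r) := by
  obtain ⟨j, hji, hj, hcount⟩ := exists_lt_and_count_eq h
  have class_eq : matchData a i = some (r, decs a r i) := matchData_eq_some_iff.2 (.inr ⟨hr, rfl⟩)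
  refine ⟨j, hji, ?_, fun k hki hk => ?_, hj⟩
  · rw [class_eq, matchData_eq_some_iff.2 (.inl ⟨hj, hcount⟩)]
  · rw [class_eq, matchData_eq_some_iff] at hk
    rcases hk with ⟨hk, hkcount⟩ | ⟨hk, hkcount⟩
    · exact (Nat.count_injective hk hj (hkcount.trans hcount.symm)).le
    · exact (hki.ne (Nat.count_injective hk hr hkcount)).elim

theorem matchedAt_matchData (h : ∀ i < N, EnabledAt a i (a i)) {i : ℕ} (hi : i < N) :
    MatchedAt N a (matchData a) i (a i) := by
  cases hr : a i with
  | inc r => exact matchedAt_inc_matchData h hi hr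
  | dec r => exact matchedAt_dec_matchData (hr ▸ h i hi) hr
  | zero r => trivial

theorem matchedAt_comp_iff {ε : Type*} {f : δ → ε} (hf : f.Injective) {i : ℕ} (b : Instr) :
    MatchedAt N a (fun k => f (D k)) i b ↔ MatchedAt N a D i b := by
  cases b <;> simp [MatchedAt, hf.eq_iff]

end Matching

section Formulas

variable {w : Word} {i : Fin w.n} {φ ψ : LFormula}

/-- The position formula `⊥`. -/
def botP : PosFormula := .neg (.or (.atom 0) (.neg (.atom 0)))

/-- A position formula as an `L`-formula: `⊥ U_@ (@ ∧ ρ)` can only be fulfilled immediately. -/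
def ofPos (ρ : PosFormula) : LFormula := .uat botP ρ

/-- The `L`-formula `⊤`. -/
def topL : LFormula := .neg (ofPos botP)

/-- Conjunction. -/
def andL (φ ψ : LFormula) : LFormula := .neg (.or (.neg φ) (.neg ψ))

/-- Disjunction of a list of formulas. -/
def anyL (l : List LFormula) : LFormula := l.foldr .or (ofPos botP)

/-- `φ` holds from the current position on. -/
def alwaysL (φ : LFormula) : LFormula := .neg (.U topL (.neg φ))

theorem not_satP_botP : ¬ satP w i botP := by
  simp only [botP, satP]
  tauto

theorem satL_ofPos {ρ : PosFormula} : satL w i (ofPos ρ) ↔ satP w i ρ := by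
  simp only [ofPos, satL, not_satP_botP, imp_false, not_lt]
  constructor
  · rintro ⟨j, hij, -, hj, hmin⟩
    rwa [le_antisymm hij (hmin i le_rfl)]
  · exact fun h => ⟨i, le_rfl, rfl, h, fun k hk => hk⟩

theorem satL_topL : satL w i topL := mt satL_ofPos.1 not_satP_botP

theorem satL_andL : satL w i (andL φ ψ) ↔ satL w i φ ∧ satL w i ψ := by
  simp only [andL, satL, not_or, not_not]

theorem satL_anyL {l : List LFormula} : satL w i (anyL l) ↔ ∃ φ ∈ l, satL w i φ := by
  induction l with
  | nil => simp [anyL, satL_ofPos, not_satP_botP]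
  | cons φ l ih => simpa [anyL, satL] using or_congr_right ih

theorem satL_alwaysL : satL w i (alwaysL φ) ↔ ∀ j, i ≤ j → satL w j φ := by
  simp only [alwaysL, satL, satL_topL]
  push Not
  simp

variable {τ : Type*} [Encodable τ]

/-- The current position carries the label of an element of `S`. -/
noncomputable def labelP (S : Finset τ) : PosFormula :=
  (S.toList.map fun t => PosFormula.atom (Encodable.encode t)).foldr .or botP

theorem satP_labelP {S : Finset τ} :
    satP w i (labelP S) ↔ ∃ t ∈ S, Encodable.encode t ∈ w.lab i := by
  simp only [labelP, ← Finset.mem_toList]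
  induction S.toList with
  | nil => simp [not_satP_botP]
  | cons t l ih => simpa [satP] using or_congr_right ih

/-- The current position carries the label of exactly one `t ∈ T`, and satisfies `φ t`. -/
noncomputable def caseL [DecidableEq τ] (T : Finset τ) (φ : τ → LFormula) : LFormula :=
  anyL (T.toList.map fun t =>
    andL (andL (ofPos (labelP {t})) (.neg (ofPos (labelP (T.erase t))))) (φ t))

theorem satL_caseL [DecidableEq τ] {T : Finset τ} {φ : τ → LFormula} :
    satL w i (caseL T φ) ↔
      ∃ t ∈ T, (∀ u ∈ T, Encodable.encode u ∈ w.lab i ↔ u = t) ∧ satL w i (φ t) := by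
  simp only [caseL, satL_anyL, List.mem_map, Finset.mem_toList, exists_exists_and_eq_and,
    satL_andL, satL, satL_ofPos, satP_labelP]
  refine exists_congr fun t => and_congr_right fun ht => and_congr_left fun _ => ?_
  simp only [Finset.mem_singleton, exists_eq_left, Finset.mem_erase, not_exists, not_and]
  grind

/-- Position `i` of the word `w` carries the label of `a i`, and of no other element of `T`. -/
def Labelled (w : Word) (T : Finset τ) (a : ℕ → τ) : Prop :=
  ∀ i : Fin w.n, a i ∈ T ∧ ∀ t ∈ T, Encodable.encode t ∈ w.lab i ↔ t = a i

theorem satL_alwaysL_caseL [DecidableEq τ] {T : Finset τ} {φ : τ → LFormula} :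
    satL w ⟨0, w.npos⟩ (alwaysL (caseL T φ)) ↔
      ∃ a : ℕ → τ, Labelled w T a ∧ ∀ i : Fin w.n, satL w i (φ (a i)) := by
  simp only [satL_alwaysL, satL_caseL]
  constructor
  · intro h
    choose a ha using fun i => h i (Nat.zero_le i)
    have extend_eq (i : Fin w.n) : Function.extend Fin.val a (fun _ => a ⟨0, w.npos⟩) i = a i :=
      Fin.val_injective.extend_apply a _ i
    refine ⟨Function.extend Fin.val a fun _ => a ⟨0, w.npos⟩, fun i => ?_, fun i => ?_⟩
    · rw [extend_eq]
      exact ⟨(ha i).1, (ha i).2.1⟩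
    · rw [extend_eq]
      exact (ha i).2.2
  · rintro ⟨a, ha, hφ⟩ i -
    exact ⟨a i, (ha i).1, (ha i).2, hφ i⟩

theorem Labelled.satP_labelP_filter {T : Finset τ} {a : ℕ → τ} (ha : Labelled w T a) {p : τ → Prop}
    [DecidablePred p] : satP w i (labelP (T.filter p)) ↔ p (a i) := by
  simp only [satP_labelP, Finset.mem_filter]
  constructor
  · rintro ⟨t, ⟨ht, hp⟩, hlab⟩
    rwa [← ((ha i).2 t ht).1 hlab]
  · exact fun hp => ⟨a i, ⟨(ha i).1, hp⟩, ((ha i).2 _ (ha i).1).2 rfl⟩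

theorem Labelled.satL_labelP_filter {T : Finset τ} {a : ℕ → τ} (ha : Labelled w T a) {p : τ → Prop}
    [DecidablePred p] : satL w i (ofPos (labelP (T.filter p))) ↔ p (a i) :=
  satL_ofPos.trans ha.satP_labelP_filter

end Formulas

section Reduction

variable {σ : Type*} [Encodable σ] {w : Word} {i : Fin w.n} {T : Finset (σ × Instr)}
  {a : ℕ → σ × Instr} {D : ℕ → ℕ}

/-- The data value of the current position matches the instruction given by the last argument, see
`MatchedAt`. -/
noncomputable def matchL (T : Finset (σ × Instr)) : Instr → LFormula
  | .inc r => andL (.neg (.Yeq topL)) (.or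
      (.uat (.neg (labelP {t ∈ T | t.2 = .zero r})) (labelP {t ∈ T | t.2 = .dec r}))
      (alwaysL (.neg (ofPos (labelP {t ∈ T | t.2 = .zero r})))))
  | .dec r => .Yeq (ofPos (labelP {t ∈ T | t.2 = .inc r}))
  | .zero _ => topL

theorem satL_Yeq_topL : satL w i (.Yeq topL) ↔ ∃ j < i, w.d j = w.d i := by
  simp only [satL, satL_topL, and_true]
  constructor
  · rintro ⟨j, hji, hd, -⟩
    exact ⟨j, hji, hd⟩
  · rintro ⟨j, hji, hd⟩
    obtain ⟨k, ⟨hki, hk⟩, hmax⟩ :=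
      Set.exists_max_image {k | k < i ∧ w.d k = w.d i} id (Set.toFinite _) ⟨j, hji, hd⟩
    exact ⟨k, hki, hk, fun l hli hl => hmax l ⟨hli, hl⟩⟩

theorem Labelled.satL_matchL_inc (ha : Labelled w T a) (hD : ∀ i, w.d i = D i) {r : ℕ} :
    satL w i (matchL T (.inc r)) ↔ MatchedAt w.n (fun k => (a k).2) D i (.inc r) := by
  have fresh_iff : satL w i (.neg (.Yeq topL)) ↔ ∀ j < (i : ℕ), D j ≠ D i := by
    rw [satL, satL_Yeq_topL]
    simp only [hD, not_exists, not_and, Fin.forall_iff, Fin.lt_def]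
    exact forall_congr' fun j => ⟨fun h hj => h (hj.trans i.isLt) hj, fun h _ hj => h hj⟩
  rw [matchL, satL_andL, fresh_iff]
  simp only [satL, satL_alwaysL, satP, ha.satP_labelP_filter, ha.satL_labelP_filter, MatchedAt, hD]
  simp only [Fin.exists_iff, Fin.forall_iff, Fin.le_def, Fin.lt_def, exists_prop]
  refine and_congr_right fun _ => or_congr_left (exists_congr fun j => and_congr_right fun hj => ?_)
  refine and_congr_right fun _ => and_congr_right fun _ => and_congr_right fun _ => ?_
  exact forall_congr' fun k => ⟨fun h hik hkj => h (hkj.trans hj) hik hkj, fun h _ => h⟩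

theorem Labelled.satL_matchL_dec (ha : Labelled w T a) (hD : ∀ i, w.d i = D i) {r : ℕ} :
    satL w i (matchL T (.dec r)) ↔ MatchedAt w.n (fun k => (a k).2) D i (.dec r) := by
  simp only [matchL, satL, ha.satL_labelP_filter, MatchedAt, hD, Fin.exists_iff, Fin.forall_iff,
    Fin.le_def, Fin.lt_def, exists_prop]
  constructor
  · rintro ⟨j, -, hji, hj, hlast, hinc⟩
    exact ⟨j, hji, hj, fun k hki => hlast k (hki.trans i.isLt) hki, hinc⟩
  · rintro ⟨j, hji, hj, hlast, hinc⟩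
    exact ⟨j, hji.trans i.isLt, hji, hj, fun k _ => hlast k, hinc⟩

theorem Labelled.satL_matchL (ha : Labelled w T a) (hD : ∀ i, w.d i = D i) (c : Instr) :
    satL w i (matchL T c) ↔ MatchedAt w.n (fun k => (a k).2) D i c := by
  cases c with
  | inc r => exact ha.satL_matchL_inc hD
  | dec r => exact ha.satL_matchL_dec hD
  | zero r => exact iff_of_true satL_topL trivial

/-- The states of the run of `M` on the sequence `c`, paired with the letters read. -/
def trace {α σ : Type*} (M : DFA α σ) (c : ℕ → α) (k : ℕ) : σ × α :=
  (M.eval ((List.range k).map c), c k)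

theorem trace_succ {α σ : Type*} (M : DFA α σ) (c : ℕ → α) (k : ℕ) :
    (trace M c (k + 1)).1 = M.step (trace M c k).1 (c k) := by
  simp only [trace, List.range_succ, List.map_append, List.map_singleton,
    DFA.eval_append_singleton]

theorem eq_trace_iff {α σ : Type*} (M : DFA α σ) {a : ℕ → σ × α} {N : ℕ} (hN : 0 < N) :
    ((a 0).1 = M.start ∧ ∀ k < N, (k + 1 < N ∧ (a (k + 1)).1 = M.step (a k).1 (a k).2) ∨
      (k + 1 = N ∧ M.step (a k).1 (a k).2 ∈ M.accept)) ↔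
    (∀ k < N, a k = trace M (fun k => (a k).2) k) ∧
      (List.range N).map (fun k => (a k).2) ∈ M.accepts := by
  let c (k : ℕ) : α := (a k).2
  have trace_start : (trace M c 0).1 = M.start := rfl
  have accepts_iff : (List.range N).map c ∈ M.accepts ↔ (trace M c N).1 ∈ M.accept := Iff.rfl
  rw [accepts_iff]
  constructor
  · rintro ⟨hstart, hnext⟩
    have heq : ∀ k < N, a k = trace M c k := by
      intro k hk
      induction k with
      | zero => exact Prod.ext hstart rfl
      | succ k ih => grind [trace_succ, trace]
    refine ⟨heq, ?_⟩
    obtain ⟨m, rfl⟩ : ∃ m, N = m + 1 := ⟨N - 1, by omega⟩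
    simpa [trace_succ, ← heq, c] using hnext m
  · grind [trace_succ]

variable (M : DFA Instr σ)

/-- The data word encoding the run of `M` on the first `N` letters of `c`. -/
noncomputable def traceWord {N : ℕ} (hN : 0 < N) (c : ℕ → Instr) : Word where
  n := N
  npos := hN
  lab k := {Encodable.encode (trace M c k)}
  d k := Encodable.encode (matchData c k)

theorem labelled_traceWord {N : ℕ} (hN : 0 < N) {c : ℕ → Instr} (hc : ∀ k < N, trace M c k ∈ T) :
    Labelled (traceWord M hN c) T (trace M c) :=
  fun k => ⟨hc k k.isLt, fun _ _ => Encodable.encode_inj⟩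

variable [DecidableEq σ]

open Classical in
/-- The state `q` is assigned to the next position or, at the end of the word, accepting. -/
noncomputable def nextL (T : Finset (σ × Instr)) (q : σ) : LFormula :=
  .or (.X (ofPos (labelP {t ∈ T | t.1 = q}))) (if q ∈ M.accept then .neg (.X topL) else ofPos botP)

theorem Labelled.satL_nextL (ha : Labelled w T a) {q : σ} : satL w i (nextL M T q) ↔
    (i + 1 < w.n ∧ (a (i + 1)).1 = q) ∨ (i + 1 = w.n ∧ q ∈ M.accept) := by
  have last_iff : ¬ (i : ℕ) + 1 < w.n ↔ (i : ℕ) + 1 = w.n := by omega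
  by_cases hq : q ∈ M.accept
  · simp [nextL, satL, ha.satL_labelP_filter, satL_topL, hq, last_iff]
  · simp [nextL, satL, ha.satL_labelP_filter, satL_ofPos, not_satP_botP, hq]

/-- The word is labelled by an accepting run of `M`, with states and instructions taken from `T`,
and its data values match increments with decrements. -/
noncomputable def runL (T : Finset (σ × Instr)) : LFormula :=
  andL (ofPos (labelP {t ∈ T | t.1 = M.start}))
    (alwaysL (caseL T fun t => andL (nextL M T (M.step t.1 t.2)) (matchL T t.2)))

theorem satL_runL (hD : ∀ i, w.d i = D i) : satL w ⟨0, w.npos⟩ (runL M T) ↔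
    ∃ a, Labelled w T a ∧ (∀ k < w.n, a k = trace M (fun k => (a k).2) k) ∧
      (List.range w.n).map (fun k => (a k).2) ∈ M.accepts ∧
      ∀ k < w.n, MatchedAt w.n (fun k => (a k).2) D k (a k).2 := by
  rw [runL, satL_andL, satL_alwaysL_caseL, ← exists_and_left]
  refine exists_congr fun a => ?_
  rw [and_left_comm]
  refine and_congr_right fun ha => ?_
  simp only [satL_andL, ha.satL_nextL M, ha.satL_matchL hD, ha.satL_labelP_filter, Fin.forall_iff,
    forall_and, ← and_assoc, ← eq_trace_iff M w.npos]

/-- `φ` holds at the next `n` positions, the current one included, and `ψ` at the following one. -/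
def prefixL (φ ψ : LFormula) : ℕ → LFormula
  | 0 => ψ
  | n + 1 => andL φ (.X (prefixL φ ψ n))

theorem satL_prefixL {α : Type*} {φ ψ : LFormula} {c : ℕ → α} {x y : α}
    (hφ : ∀ i : Fin w.n, satL w i φ ↔ c i = x) (hψ : ∀ i : Fin w.n, satL w i ψ ↔ c i = y) (n : ℕ) :
    satL w i (prefixL φ ψ n) ↔
      List.replicate n x ++ [y] <+: ((List.range w.n).map c).drop i := by
  have drop_eq (i : Fin w.n) : ((List.range w.n).map c).drop i =
      c i :: ((List.range w.n).map c).drop (i + 1) := by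
    rw [List.drop_eq_getElem_cons (by simp)]
    simp
  induction n generalizing i with
  | zero => simp [prefixL, hψ, drop_eq, eq_comm]
  | succ n ih =>
    rw [prefixL, satL_andL, hφ, drop_eq, List.replicate_succ, List.cons_append,
      List.cons_prefix_cons, eq_comm]
    refine and_congr_right fun _ => ?_
    by_cases h : (i : ℕ) + 1 < w.n
    · simp [satL, h, ih]
    · have drop_nil : ((List.range w.n).map c).drop (i + 1) = [] :=
        List.drop_eq_nil_of_le (by simpa using h)
      simp [satL, h, drop_nil]

/-- A formula satisfied by the data words that encode the runs of the counter program recognized by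
`M` on input `n`, with states and instructions taken from `T`. -/
noncomputable def haltsL (T : Finset (σ × Instr)) (n : ℕ) : LFormula :=
  andL (runL M T) (prefixL (ofPos (labelP {t ∈ T | t.2 = .inc 0}))
    (ofPos (labelP {t ∈ T | t.2 = .zero 1})) n)

theorem satL_haltsL (hD : ∀ i, w.d i = D i) {n : ℕ} : satL w ⟨0, w.npos⟩ (haltsL M T n) ↔
    ∃ c, Labelled w T (trace M c) ∧ (List.range w.n).map c ∈ M.accepts ∧
      inputPrefix n <+: (List.range w.n).map c ∧ ∀ k < w.n, MatchedAt w.n c D k (c k) := by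
  have prefix_iff {a : ℕ → σ × Instr} (ha : Labelled w T a) : satL w ⟨0, w.npos⟩
      (prefixL (ofPos (labelP {t ∈ T | t.2 = .inc 0})) (ofPos (labelP {t ∈ T | t.2 = .zero 1})) n) ↔
      inputPrefix n <+: (List.range w.n).map fun k => (a k).2 :=
    satL_prefixL (c := fun k => (a k).2) (fun _ => ha.satL_labelP_filter)
      (fun _ => ha.satL_labelP_filter) n
  rw [haltsL, satL_andL, satL_runL M hD]
  constructor
  · rintro ⟨⟨a, ha, heq, haccept, hmatch⟩, hprefix⟩
    refine ⟨fun k => (a k).2, fun i => ?_, haccept, (prefix_iff ha).1 hprefix, hmatch⟩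
    exact heq i i.isLt ▸ ha i
  · rintro ⟨c, hc, haccept, hprefix, hmatch⟩
    exact ⟨⟨trace M c, hc, fun _ _ => rfl, haccept, hmatch⟩, (prefix_iff hc).2 hprefix⟩

theorem satisfiable_haltsL_iff (hT : ∀ x ∈ M.accepts, ∀ c ∈ x, ∀ q, (q, c) ∈ T) (n : ℕ) :
    Satisfiable (haltsL M T n) ↔
      ∃ x ∈ M.accepts, inputPrefix n <+: x ∧ (x.foldlM step 0).isSome := by
  constructor
  · rintro ⟨w, hw⟩
    obtain ⟨c, -, haccept, hprefix, hmatch⟩ := (satL_haltsL M (D := Function.extend Fin.val w.d 0)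
      fun i => (Fin.val_injective.extend_apply w.d 0 i).symm).1 hw
    exact ⟨_, haccept, hprefix,
      isSome_foldlM_step_iff.2 fun i hi => enabledAt_of_matchedAt hmatch hi⟩
  · rintro ⟨x, haccept, hprefix, hrun⟩
    obtain ⟨N, c, rfl⟩ : ∃ N, ∃ c : ℕ → Instr, x = (List.range N).map c :=
      ⟨x.length, fun k => x.getD k (.inc 0), by
        apply List.ext_getElem <;> simp +contextual⟩
    have hN : n < N := by simpa [inputPrefix] using hprefix.length_le
    rw [isSome_foldlM_step_iff] at hrun
    refine ⟨traceWord M (Nat.zero_lt_of_lt hN) c,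
      (satL_haltsL M (D := fun k => Encodable.encode (matchData c k)) fun _ => rfl).2
        ⟨c, labelled_traceWord M _ fun k hk => ?_, haccept, hprefix, fun k hk => ?_⟩⟩
    · exact hT _ haccept _ (List.mem_map_of_mem (List.mem_range.2 hk)) _
    · exact (matchedAt_comp_iff Encodable.encode_injective _).2 (matchedAt_matchData hrun hk)

/-- The effect of `andL` on codes of formulas. -/
def andCode (m n : ℕ) : ℕ := .pair 1 (.pair 2 (.pair (.pair 1 m) (.pair 1 n)))

theorem encodeL_andL (φ ψ : LFormula) : encodeL (andL φ ψ) = andCode (encodeL φ) (encodeL ψ) := rfl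

theorem primrec₂_andCode : Primrec₂ andCode :=
  Primrec₂.natPair.comp (.const 1) (Primrec₂.natPair.comp (.const 2) (Primrec₂.natPair.comp
    (Primrec₂.natPair.comp (.const 1) .fst) (Primrec₂.natPair.comp (.const 1) .snd)))

theorem primrec_encodeL_prefixL (φ ψ : LFormula) : Primrec fun n => encodeL (prefixL φ ψ n) := by
  have primrec_succ : Primrec₂ fun _ code : ℕ => andCode (encodeL φ) (.pair 3 code) :=
    primrec₂_andCode.comp (.const _) (Primrec₂.natPair.comp (.const 3) .snd)
  refine (Primrec.nat_rec₁ (encodeL ψ) primrec_succ).of_eq fun n => ?_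
  induction n with
  | zero => rfl
  | succ n ih => rw [prefixL, encodeL_andL, encodeL, ← ih]

theorem primrec_encodeL_haltsL (T : Finset (σ × Instr)) :
    Primrec fun n => encodeL (haltsL M T n) :=
  primrec₂_andCode.comp (.const (encodeL (runL M T))) (primrec_encodeL_prefixL _ _)

end Reduction

/-- Satisfiability of `L`-formulas over finite 1-attributed words is
undecidable: no computable function (on Gödel codes) decides it. -/
theorem undecidable_satisfiability_finite :
    ¬ ∃ f : ℕ → Bool, Computable f ∧
      ∀ φ : LFormula, (f (encodeL φ) = true ↔ Satisfiable φ) := by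
  classical
  rintro ⟨f, hf, hsat⟩
  obtain ⟨P, dom_iff⟩ := exists_program_dom_eval_iff
  obtain ⟨σ, _, M, hM⟩ := isRegular_matches' P
  obtain ⟨A, hA⟩ := exists_finset_letters P
  have := Encodable.ofCountable σ
  have halts_iff (c : Nat.Partrec.Code) :
      (c.eval 0).Dom ↔ Satisfiable (haltsL M (Finset.univ ×ˢ A) (Encodable.encode c)) := by
    rw [dom_iff, ← hM, satisfiable_haltsL_iff]
    exact fun x hx b hb _ => Finset.mem_product.2 ⟨Finset.mem_univ _, hA x (hM ▸ hx) b hb⟩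
  apply ComputablePred.halting_problem 0
  rw [ComputablePred.computable_iff]
  refine ⟨fun c => f (encodeL (haltsL M (Finset.univ ×ˢ A) (Encodable.encode c))), ?_, ?_⟩
  · exact hf.comp ((primrec_encodeL_haltsL M _).comp .encode).to_comp
  · funext c
    rw [halts_iff, hsat]

end Stmt0
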